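/- Let R be a commutative noetherian ring. Then the following are equivalent: (i) every function φ : Spec R → ℤ_{≥0} with φ(p) ≤ depth(R_p) for all primes p is order-preserving, i.e. φ(q) ≤ φ(p) whenever q ⊆ p; (ii) the Krull dimension of R is at most 1. -/

import Mathlib

open CategoryTheory Opposite

noncomputable section

/-- Vanishing of the `n`-th Ext group of two `R`-modules. -/
def extV (R : Type) [Ring R] (M N : ModuleCat.{0} R) (n : ℕ) : Prop :=
  Subsingleton (((_root_.Ext ℤ (ModuleCat.{0} R) n).obj (op M)).obj N)

/-- The left `Ext^1`-orthogonal class. -/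
def leftPerp1 (R : Type) [Ring R] (𝒳 : Set (ModuleCat.{0} R)) : Set (ModuleCat.{0} R) :=
  {M | ∀ X ∈ 𝒳, extV R M X 1}

/-- The right `Ext^1`-orthogonal class. -/
def rightPerp1 (R : Type) [Ring R] (𝒳 : Set (ModuleCat.{0} R)) : Set (ModuleCat.{0} R) :=
  {N | ∀ X ∈ 𝒳, extV R X N 1}

/-- `(𝒞, 𝒲)` is a cotorsion pair. -/
def IsCotorsionPair (R : Type) [Ring R] (𝒞 𝒲 : Set (ModuleCat.{0} R)) : Prop :=
  𝒞 = leftPerp1 R 𝒲 ∧ 𝒲 = rightPerp1 R 𝒞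

/-- `(𝒞, 𝒲)` is a hereditary cotorsion pair. -/
def IsHereditaryCotorsionPair (R : Type) [Ring R] (𝒞 𝒲 : Set (ModuleCat.{0} R)) : Prop :=
  IsCotorsionPair R 𝒞 𝒲 ∧ ∀ X ∈ 𝒞, ∀ Y ∈ 𝒲, ∀ i : ℕ, 1 ≤ i → extV R X Y i

/-- The class `𝒞_(i) = {M ∣ Ext^j(M, W) = 0 for all j > i and all W ∈ 𝒲}`. -/
def cotShift (R : Type) [Ring R] (𝒲 : Set (ModuleCat.{0} R)) (i : ℕ) : Set (ModuleCat.{0} R) :=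
  {M | ∀ Y ∈ 𝒲, ∀ j : ℕ, i < j → extV R M Y j}

/-- `f : A →ₗ[R] B` is a pure monomorphism. -/
def IsPureMono (R : Type) [CommRing R] {A B : Type} [AddCommGroup A] [Module R A]
    [AddCommGroup B] [Module R B] (f : A →ₗ[R] B) : Prop :=
  Function.Injective f ∧
    ∀ (Q : Type) [AddCommGroup Q] [Module R Q], Function.Injective (LinearMap.lTensor Q f)

/-- An `R`-module `N` is pure-injective if it is injective with respect to
pure monomorphisms. -/
def PureInjective (R : Type) [CommRing R] (N : Type) [AddCommGroup N] [Module R N] : Prop :=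
  ∀ (A B : Type) [AddCommGroup A] [Module R A] [AddCommGroup B] [Module R B]
    (f : A →ₗ[R] B), IsPureMono R f → ∀ g : A →ₗ[R] N, ∃ h : B →ₗ[R] N, h.comp f = g

/-- `N` has injective dimension at most `n`: all Ext-groups above degree `n` vanish. -/
def injDimLE (R : Type) [Ring R] (N : ModuleCat.{0} R) (n : ℕ) : Prop :=
  ∀ M : ModuleCat.{0} R, ∀ j : ℕ, n < j → extV R M N j

/-- The class of pure-injective `R`-modules of finite injective dimension. -/
def PIFinInj (R : Type) [CommRing R] : Set (ModuleCat.{0} R) :=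
  {N | PureInjective R ↥N ∧ ∃ n : ℕ, injDimLE R N n}

/-- The depth of a module over a commutative noetherian local ring, as the infimum of
the degrees in which `Ext(k, M)` does not vanish (`⊤` if all vanish). -/
def rdepth (A : Type) [CommRing A] [IsLocalRing A] (M : Type) [AddCommGroup M]
    [Module A M] : ℕ∞ :=
  sInf {n : ℕ∞ | ∃ i : ℕ, n = (i : ℕ∞) ∧
    ¬ extV A (ModuleCat.of A (IsLocalRing.ResidueField A)) (ModuleCat.of A M) i}

/-- The residue field `k(p)` of `R_p`, as an `R`-module. -/
abbrev resField (R : Type) [CommRing R] (p : PrimeSpectrum R) : Type :=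
  LocalizedModule p.asIdeal.primeCompl (R ⧸ p.asIdeal)

/-- `depth(R_p)`. -/
def ringDepthAt (R : Type) [CommRing R] (p : PrimeSpectrum R) : ℕ∞ :=
  rdepth (Localization.AtPrime p.asIdeal) (Localization.AtPrime p.asIdeal)

/-- `depth_{R_p}(M_p)`. -/
def depthAt (R : Type) [CommRing R] (p : PrimeSpectrum R) (M : Type) [AddCommGroup M]
    [Module R M] : ℕ∞ :=
  rdepth (Localization.AtPrime p.asIdeal) (LocalizedModule p.asIdeal.primeCompl M)

/-- `f : M →ₗ[R] E` exhibits `E` as an injective envelope of `M`: `E` is injective and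
`f` is an essential monomorphism. -/
def IsInjectiveEnvelope (R : Type) [Ring R] {M E : Type} [AddCommGroup M] [Module R M]
    [AddCommGroup E] [Module R E] (f : M →ₗ[R] E) : Prop :=
  Module.Injective R E ∧ Function.Injective f ∧
    ∀ K : Submodule R E, K ≠ ⊥ → K ⊓ LinearMap.range f ≠ ⊥

open CategoryTheory Limits in
lemma extV_zero_iff (A : Type) [CommRing A] (M N : ModuleCat.{0} A) :
    extV A M N 0 ↔ Subsingleton (M ⟶ N) := by
  let F := (linearYoneda ℤ (ModuleCat.{0} A)).obj N
  have : PreservesLimits (F ⋙ forget (ModuleCat.{0} ℤ)) :=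
    (inferInstance : PreservesLimits (yoneda.obj N))
  have : PreservesLimits F := preservesLimits_of_reflects_of_preserves F (forget _)
  have : PreservesFiniteColimits F.rightOp := preservesFiniteColimits_rightOp F
  let e : (((_root_.Ext ℤ (ModuleCat.{0} A) 0).obj (op M)).obj N) ≅ F.obj (op M) :=
    (F.rightOp.leftDerivedZeroIsoSelf.app M).unop.symm
  exact e.toLinearEquiv.toEquiv.subsingleton_congr

lemma extV_zero_local (A : Type) [CommRing A] [IsNoetherianRing A] [IsLocalRing A] :
    ¬ extV A (ModuleCat.of A (IsLocalRing.ResidueField A)) (ModuleCat.of A A) 0 ↔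
      IsLocalRing.maximalIdeal A ∈ associatedPrimes A A := by
  rw [extV_zero_iff, AssociatedPrimes.mem_iff, isAssociatedPrime_iff_exists_injective_linearMap,
    (ModuleCat.homEquiv).subsingleton_congr, not_subsingleton_iff_nontrivial]
  constructor
  · intro h
    obtain ⟨f, hf⟩ := exists_ne (0 : IsLocalRing.ResidueField A →ₗ[A] A)
    suffices hinj : Function.Injective f from ⟨inferInstance, f, hinj⟩
    rw [injective_iff_map_eq_zero]
    intro a ha
    by_contra hne
    apply hf
    ext b
    obtain ⟨c, hc⟩ := IsLocalRing.residue_surjective (b * a⁻¹)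
    have : b = c • a := by
      rw [Algebra.smul_def, IsLocalRing.ResidueField.algebraMap_eq, hc, mul_assoc,
        inv_mul_cancel₀ hne, mul_one]
    rw [this, map_smul, ha]
    simp
  · rintro ⟨_, f, hf⟩
    refine ⟨⟨f, 0, fun h => ?_⟩⟩
    have h1 : f 1 = 0 := by rw [h]; rfl
    have := hf (h1.trans (map_zero f).symm)
    exact one_ne_zero (α := IsLocalRing.ResidueField A) this

lemma mem_ass_iff (R : Type) [CommRing R] [IsNoetherianRing R] (p : PrimeSpectrum R) :
    IsLocalRing.maximalIdeal (Localization.AtPrime p.asIdeal) ∈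
      associatedPrimes (Localization.AtPrime p.asIdeal) (Localization.AtPrime p.asIdeal) ↔
    p.asIdeal ∈ associatedPrimes R R := by
  rw [← Module.associatedPrimes.preimage_comap_associatedPrimes_eq_associatedPrimes_of_isLocalizedModule
    p.asIdeal.primeCompl (Localization.AtPrime p.asIdeal)
    (Algebra.linearMap R (Localization.AtPrime p.asIdeal)), Set.mem_preimage]
  have := Localization.AtPrime.under_maximalIdeal (I := p.asIdeal)
  rw [Ideal.under] at this
  rw [this]

lemma depth_of_mem (R : Type) [CommRing R] [IsNoetherianRing R] (p : PrimeSpectrum R)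
    (h : p.asIdeal ∈ associatedPrimes R R) : ringDepthAt R p = 0 := by
  have : IsNoetherianRing (Localization.AtPrime p.asIdeal) :=
    IsLocalization.isNoetherianRing p.asIdeal.primeCompl _ inferInstance
  rw [← mem_ass_iff, ← extV_zero_local] at h
  exact le_antisymm (sInf_le ⟨0, by simp, h⟩) zero_le

lemma depth_of_notMem (R : Type) [CommRing R] [IsNoetherianRing R] (p : PrimeSpectrum R)
    (h : p.asIdeal ∉ associatedPrimes R R) : 1 ≤ ringDepthAt R p := by
  have : IsNoetherianRing (Localization.AtPrime p.asIdeal) :=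
    IsLocalization.isNoetherianRing p.asIdeal.primeCompl _ inferInstance
  rw [← mem_ass_iff, ← extV_zero_local, not_not] at h
  refine le_sInf ?_
  rintro _ ⟨i, rfl, hi⟩
  rcases Nat.eq_zero_or_pos i with rfl | hpos
  · exact absurd h hi
  · exact_mod_cast hpos

/-- a commutative noetherian ring has the property that every function
`φ : Spec R → ℤ≥0` bounded by the depth function is order-preserving if and only if
its Krull dimension is at most one. -/
theorem stmt19 (R : Type) [CommRing R] [IsNoetherianRing R] :
    (∀ φ : PrimeSpectrum R → ℕ, (∀ p, (φ p : ℕ∞) ≤ ringDepthAt R p) →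
      ∀ p q : PrimeSpectrum R, p.asIdeal ≤ q.asIdeal → φ p ≤ φ q) ↔
    ringKrullDim R ≤ 1 := by
  classical
  constructor
  · intro H
    unfold ringKrullDim
    rw [Order.krullDim_le_one_iff]
    intro x
    by_contra hx
    rw [not_or, isMin_iff_forall_not_lt, isMax_iff_forall_not_lt] at hx
    push Not at hx
    obtain ⟨⟨y, hy⟩, z, hz⟩ := hx
    have hfin : {P ∈ associatedPrimes R R | ¬ z.asIdeal ≤ P}.Finite :=
      (associatedPrimes.finite R R).subset (Set.sep_subset _ _)
    have hav := (Ideal.subset_union_prime_finite hfin (f := id) 0 0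
      (fun i hi _ _ => hi.1.1) (I := z.asIdeal)).not.mpr (by
        rintro ⟨i, hi, hle⟩
        exact hi.2 hle)
    obtain ⟨a, haz, ha⟩ := Set.not_subset.mp hav
    obtain ⟨p, hp, hpz⟩ := Ideal.exists_minimalPrimes_le (I := Ideal.span {a}) (J := z.asIdeal)
      ((Ideal.span_singleton_le_iff_mem _).mpr haz)
    have hpp : p.IsPrime := hp.1.1
    have hht : p.height ≤ 1 :=
      Ideal.height_le_one_of_isPrincipal_of_mem_minimalPrimes (Ideal.span {a}) p hp
    have hnz : ¬ z.asIdeal ≤ p := by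
      intro hle
      have h1 := Ideal.height_add_one_le_of_lt_of_isPrime (I := y.asIdeal) (J := x.asIdeal) hy
      have h2 := Ideal.height_add_one_le_of_lt_of_isPrime (I := x.asIdeal) (J := z.asIdeal) hz
      have h3 := (Ideal.height_mono hle).trans hht
      have h4 : (1 : ℕ∞) ≤ x.asIdeal.height := le_trans (by simp) h1
      have h5 : (1 : ℕ∞) + 1 ≤ 1 := (add_le_add_left h4 1).trans (h2.trans h3)
      exact absurd h5 (by decide)
    have hna : p ∉ associatedPrimes R R := by
      intro hmem
      apply ha
      simp only [Set.mem_iUnion]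
      exact ⟨p, ⟨hmem, hnz⟩, hp.1.2 (Ideal.mem_span_singleton_self a)⟩
    have hd := depth_of_notMem R ⟨p, hpp⟩ hna
    have := H (fun q => if q = ⟨p, hpp⟩ then 1 else 0) (by
      intro q
      by_cases hq : q = ⟨p, hpp⟩
      · subst hq
        simpa using hd
      · simp [hq]) ⟨p, hpp⟩ z hpz
    have hzne : z ≠ ⟨p, hpp⟩ := by
      rintro rfl
      exact hnz le_rfl
    simp [hzne] at this
  · intro H φ hφ p q hpq
    rcases eq_or_lt_of_le (show p ≤ q from hpq) with rfl | hlt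
    · exact le_rfl
    unfold ringKrullDim at H
    rw [Order.krullDim_le_one_iff] at H
    have hmin : IsMin p := (H p).resolve_right (fun h => h.not_lt hlt)
    have hass : p.asIdeal ∈ associatedPrimes R R := by
      apply Module.associatedPrimes.minimalPrimes_annihilator_subset_associatedPrimes R R
      refine ⟨⟨p.2, ?_⟩, ?_⟩
      · simp [Module.annihilator_eq_bot.mpr inferInstance]
      · rintro J ⟨hJ, -⟩ hle
        exact hmin (b := ⟨J, hJ⟩) hle
    have := hφ p
    rw [depth_of_mem R p hass] at this
    have h0 : φ p = 0 := by simpa using this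
    omega
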